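/- (Closed form for bumpered billiard tables B1(5,n), odd case.) For every odd n ≥ 3 and all signs e ∈ {1,-1}^(2n-2): BT_n(e₁,…,e_{2n-2}) = S(e₁,e₂,e₃,e₄)·∏_{m=1}^{(n-3)/2} Ñ(e_{4m+1},e_{4m+2},e_{4m+3},e_{4m+4}) + Σ_{i=0}^{(n-3)/2} H_{n-1-2i}(e₁,…,e_{2n-4-4i})·X(e_{2n-3-4i},e_{2n-2-4i})·∏_{m=1}^{i} Ñ(e_{2n-1-4i+4(m-1)},e_{2n-4i+4(m-1)},e_{2n+1-4i+4(m-1)},e_{2n+2-4i+4(m-1)}) + Σ_{i=0}^{(n-5)/2} H_{n-2-2i}(e₁,…,e_{2n-6-4i})·R̃(e_{2n-5-4i},e_{2n-4-4i},e_{2n-3-4i},e_{2n-2-4i})·∏_{m=1}^{i} Ñ(e_{2n-1-4i+4(m-1)},e_{2n-4i+4(m-1)},e_{2n+1-4i+4(m-1)},e_{2n+2-4i+4(m-1)}). -/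

import Mathlib

/-!
For odd `n ≥ 5` the recursion reads `BT_n = H_{n-1}·X + H_{n-2}·R̃ + BT_{n-2}·Ñ`, a first-order
linear recurrence in `k = (n - 3) / 2` whose coefficients `X`, `R̃`, `Ñ` depend on the last four
signs only. Unrolling it down to `BT_3 = H_2·X + S` gives the closed form. Formally this is an
induction on `k` (`BTb_closed_form_aux`): the `i = 0` summands are the two inhomogeneous terms of
`BTb_odd_step`, and the remaining ones are the closed form for `k - 1` multiplied by the new `Ñ`,
which `prod_CNt_step` recognises as the last factor of each product.
-/

open LaurentPolynomial Finset

noncomputable section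

/-- The ring `ℤ[A, A⁻¹]` of Laurent polynomials over `ℤ`; the variable `A` is
`LaurentPolynomial.T 1`, and `A^n = T n` for `n : ℤ`. -/
abbrev KR : Type := LaurentPolynomial ℤ

/-- `a ε = A^ε`. -/
def Ca (ε : ℤ) : KR := T ε

/-- `f₂ ε = -A^(-3ε)`. -/
def Cf₂ (ε : ℤ) : KR := -T (-3 * ε)

/-- `δ = -A² - A⁻²`. -/
def Cδ : KR := -T 2 - T (-2)

/-- `X(α,β) = δ·a(α)a(β) + a(α)a(-β) + a(-α)a(β)`. -/
def CX (α β : ℤ) : KR := Cδ * Ca α * Ca β + Ca α * Ca (-β) + Ca (-α) * Ca β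

/-- `g₂(α,β) = X(α,β) + δ·a(-α)a(-β)`, the Kauffman bracket of `T(4,2)`. -/
def Cg₂ (α β : ℤ) : KR := CX α β + Cδ * Ca (-α) * Ca (-β)

/-- `K(α,β,γ,η) = f₂(-α)f₂(-β)a(-γ)a(-η)`. -/
def CK (α β γ η : ℤ) : KR := Cf₂ (-α) * Cf₂ (-β) * Ca (-γ) * Ca (-η)

/-- `N(α,β,γ,η) = f₂(-α)a(-β)a(-γ)a(-η)`. -/
def CN (α β γ η : ℤ) : KR := Cf₂ (-α) * Ca (-β) * Ca (-γ) * Ca (-η)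

/-- `Ñ(α,β,γ,η) = a(-α)f₂(-β)a(-γ)a(-η)`. -/
def CNt (α β γ η : ℤ) : KR := Ca (-α) * Cf₂ (-β) * Ca (-γ) * Ca (-η)

/-- `R(α,β,γ,η) = f₂(-α)a(β)a(-γ)a(-η)`. -/
def CR (α β γ η : ℤ) : KR := Cf₂ (-α) * Ca β * Ca (-γ) * Ca (-η)

/-- `R̃(α,β,γ,η) = a(α)f₂(-β)a(-γ)a(-η)`. -/
def CRt (α β γ η : ℤ) : KR := Ca α * Cf₂ (-β) * Ca (-γ) * Ca (-η)

/-- `S(α,β,γ,η) = f₂(α)f₂(-β)a(-γ)a(-η)`. -/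
def CS (α β γ η : ℤ) : KR := Cf₂ α * Cf₂ (-β) * Ca (-γ) * Ca (-η)

/-- `L(α,β,γ) = f₂(-α)a(β)a(-γ)`. -/
def CL (α β γ : ℤ) : KR := Cf₂ (-α) * Ca β * Ca (-γ)

/-- `M(α,β,γ) = f₂(-α)f₂(β)a(-γ)`. -/
def CM (α β γ : ℤ) : KR := Cf₂ (-α) * Cf₂ β * Ca (-γ)

mutual
  /-- `H n e` is the Kauffman bracket of the Chebyshev billiard table diagram `T(5,n)`
  with crossing signs `e 1, …, e (2n-2)`. -/
  def Hb : ℕ → (ℕ → ℤ) → KR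
    | 0, _ => 1
    | 1, _ => 1
    | 2, e =>
        Ca (e 1) * Ca (e 2) + Cδ * Ca (e 1) * Ca (-e 2) + Cδ * Ca (-e 1) * Ca (e 2)
          + Cδ ^ 2 * Ca (-e 1) * Ca (-e 2)
    | m + 3, e =>
        Hb (m + 2) e * Ca (e (2 * m + 3)) * Ca (e (2 * m + 4))
          + Hb (m + 1) e * CK (e (2 * m + 1)) (e (2 * m + 2)) (e (2 * m + 3)) (e (2 * m + 4))
          + if (m + 3) % 2 = 1 then
              BTb (m + 2) e * Ca (e (2 * m + 3)) * Ca (-e (2 * m + 4))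
                + Bb (m + 2) (Function.update e (2 * m + 1) (e (2 * m + 2)))
                    * Cf₂ (-e (2 * m + 1)) * Ca (-e (2 * m + 3)) * Ca (e (2 * m + 4))
            else
              BTb (m + 2) e * Ca (-e (2 * m + 3)) * Ca (e (2 * m + 4))
                + Bb (m + 2) e * Cf₂ (-e (2 * m + 2)) * Ca (e (2 * m + 3)) * Ca (-e (2 * m + 4))
  termination_by n _ => n

  /-- `B n e` is the Kauffman bracket of the bumpered billiard table `B2(5,n)` with
  crossing signs `e 1, …, e (2n-3)`. -/
  def Bb : ℕ → (ℕ → ℤ) → KR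
    | 0, _ => 1
    | 1, _ => 1
    | 2, e => Cf₂ (e 1)
    | m + 3, e =>
        Hb (m + 2) e * Ca (e (2 * m + 3))
          + if (m + 3) % 2 = 1 then
              Bb (m + 2) (Function.update e (2 * m + 1) (e (2 * m + 2)))
                * Cf₂ (-e (2 * m + 1)) * Ca (-e (2 * m + 3))
            else
              Bb (m + 2) e * Cf₂ (-e (2 * m + 2)) * Ca (-e (2 * m + 3))
  termination_by n _ => n

  /-- `BT n e` is the Kauffman bracket of the bumpered billiard table `B1(5,n)` with its
  crossingless tangle closure, with crossing signs `e 1, …, e (2n-2)`. -/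
  def BTb : ℕ → (ℕ → ℤ) → KR
    | 0, _ => 1
    | 1, _ => 1
    | 2, e => Cg₂ (e 1) (e 2)
    | 3, e => Hb 2 e * CX (e 3) (e 4) + CS (e 1) (e 2) (e 3) (e 4)
    | 4, e =>
        Hb 3 e * CX (e 5) (e 6) + Hb 2 e * CR (e 3) (e 4) (e 5) (e 6)
          + Cg₂ (e 1) (e 2) * CN (e 3) (e 4) (e 5) (e 6)
    | m + 5, e =>
        Hb (m + 4) e * CX (e (2 * m + 7)) (e (2 * m + 8))
          + if (m + 5) % 2 = 1 then
              Hb (m + 3) e * CRt (e (2 * m + 5)) (e (2 * m + 6)) (e (2 * m + 7)) (e (2 * m + 8))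
                + BTb (m + 3) e * CNt (e (2 * m + 5)) (e (2 * m + 6)) (e (2 * m + 7)) (e (2 * m + 8))
            else
              Hb (m + 3) e * CR (e (2 * m + 5)) (e (2 * m + 6)) (e (2 * m + 7)) (e (2 * m + 8))
                + BTb (m + 3) e * CN (e (2 * m + 5)) (e (2 * m + 6)) (e (2 * m + 7)) (e (2 * m + 8))
  termination_by n _ => n
end

/-- The odd recursion for `BTb`, written at `n = 2k + 5`. -/
lemma BTb_odd_step (k : ℕ) (e : ℕ → ℤ) :
    BTb (2 * k + 5) e =
      Hb (2 * k + 4) e * CX (e (4 * k + 7)) (e (4 * k + 8))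
        + (Hb (2 * k + 3) e *
            CRt (e (4 * k + 5)) (e (4 * k + 6)) (e (4 * k + 7)) (e (4 * k + 8))
          + BTb (2 * k + 3) e *
            CNt (e (4 * k + 5)) (e (4 * k + 6)) (e (4 * k + 7)) (e (4 * k + 8))) := by
  have h : (2 * k + 5) % 2 = 1 := by omega
  rw [BTb, if_pos h]
  simp only [show 2 * (2 * k) = 4 * k by ring]

/-- Raising `n` by two and `i` by one keeps the first index of the product of `Ñ`s in the
`i`-th summand and appends one factor at the top, the coefficient of `BTb (2k + 3)` in
the recursion. The bound on `i` keeps the subtractions from truncating. -/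
lemma prod_CNt_step (k i : ℕ) (hi : i ≤ k) (e : ℕ → ℤ) :
    ∏ m ∈ Finset.range (i + 1),
        CNt (e (2 * (2 * k + 5) - 1 - 4 * (i + 1) + 4 * m))
          (e (2 * (2 * k + 5) - 4 * (i + 1) + 4 * m))
          (e (2 * (2 * k + 5) + 1 - 4 * (i + 1) + 4 * m))
          (e (2 * (2 * k + 5) + 2 - 4 * (i + 1) + 4 * m)) =
      (∏ m ∈ Finset.range i,
        CNt (e (2 * (2 * k + 3) - 1 - 4 * i + 4 * m)) (e (2 * (2 * k + 3) - 4 * i + 4 * m))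
          (e (2 * (2 * k + 3) + 1 - 4 * i + 4 * m)) (e (2 * (2 * k + 3) + 2 - 4 * i + 4 * m))) *
        CNt (e (4 * k + 5)) (e (4 * k + 6)) (e (4 * k + 7)) (e (4 * k + 8)) := by
  rw [Finset.prod_range_succ]
  congr 1
  · refine Finset.prod_congr rfl fun m _ => ?_
    congr 2 <;> omega
  · congr 2 <;> omega

/-- The closed form at `n = 2k + 3`. -/
lemma BTb_closed_form_aux (e : ℕ → ℤ) (k : ℕ) :
    BTb (2 * k + 3) e =
      CS (e 1) (e 2) (e 3) (e 4) *
          ∏ m ∈ Finset.range k,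
            CNt (e (4 * m + 5)) (e (4 * m + 6)) (e (4 * m + 7)) (e (4 * m + 8))
        + (∑ i ∈ Finset.range (k + 1),
            Hb (2 * k + 3 - 1 - 2 * i) e *
              CX (e (2 * (2 * k + 3) - 3 - 4 * i)) (e (2 * (2 * k + 3) - 2 - 4 * i)) *
              ∏ m ∈ Finset.range i,
                CNt (e (2 * (2 * k + 3) - 1 - 4 * i + 4 * m))
                  (e (2 * (2 * k + 3) - 4 * i + 4 * m))
                  (e (2 * (2 * k + 3) + 1 - 4 * i + 4 * m))
                  (e (2 * (2 * k + 3) + 2 - 4 * i + 4 * m)))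
        + ∑ i ∈ Finset.range k,
            Hb (2 * k + 3 - 2 - 2 * i) e *
                CRt (e (2 * (2 * k + 3) - 5 - 4 * i)) (e (2 * (2 * k + 3) - 4 - 4 * i))
                  (e (2 * (2 * k + 3) - 3 - 4 * i)) (e (2 * (2 * k + 3) - 2 - 4 * i)) *
              ∏ m ∈ Finset.range i,
                CNt (e (2 * (2 * k + 3) - 1 - 4 * i + 4 * m))
                  (e (2 * (2 * k + 3) - 4 * i + 4 * m))
                  (e (2 * (2 * k + 3) + 1 - 4 * i + 4 * m))
                  (e (2 * (2 * k + 3) + 2 - 4 * i + 4 * m)) := by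
  induction k with
  | zero => simp [BTb, add_comm]
  | succ k ih =>
    rw [show 2 * (k + 1) + 3 = 2 * k + 5 by ring, BTb_odd_step,
      Finset.prod_range_succ, Finset.sum_range_succ' _ k, Finset.sum_range_succ' _ (k + 1)]
    -- The `i = 0` summands are the two `Hb` terms of the recursion; the summands of index
    -- `i + 1` are those of the closed form for `k`, each times the appended `CNt` factor.
    have hX : ∀ i ∈ Finset.range (k + 1), _ = _ := fun i hi =>
      congrArg (fun p => Hb (2 * k + 5 - 1 - 2 * (i + 1)) e *
        CX (e (2 * (2 * k + 5) - 3 - 4 * (i + 1))) (e (2 * (2 * k + 5) - 2 - 4 * (i + 1))) * p)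
        (prod_CNt_step k i (by have := Finset.mem_range.mp hi; omega) e)
    have hR : ∀ i ∈ Finset.range k, _ = _ := fun i hi =>
      congrArg (fun p => Hb (2 * k + 5 - 2 - 2 * (i + 1)) e *
        CRt (e (2 * (2 * k + 5) - 5 - 4 * (i + 1))) (e (2 * (2 * k + 5) - 4 - 4 * (i + 1)))
          (e (2 * (2 * k + 5) - 3 - 4 * (i + 1))) (e (2 * (2 * k + 5) - 2 - 4 * (i + 1))) * p)
        (prod_CNt_step k i (by have := Finset.mem_range.mp hi; omega) e)
    rw [Finset.sum_congr rfl hX, Finset.sum_congr rfl hR, ih]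
    simp only [← mul_assoc, ← Finset.sum_mul, Finset.prod_range_zero, mul_one, mul_zero,
      fun i => show 2 * k + 5 - 1 - 2 * (i + 1) = 2 * k + 3 - 1 - 2 * i by omega,
      fun i => show 2 * k + 5 - 2 - 2 * (i + 1) = 2 * k + 3 - 2 - 2 * i by omega,
      fun i => show 2 * (2 * k + 5) - 2 - 4 * (i + 1) = 2 * (2 * k + 3) - 2 - 4 * i by omega,
      fun i => show 2 * (2 * k + 5) - 3 - 4 * (i + 1) = 2 * (2 * k + 3) - 3 - 4 * i by omega,
      fun i => show 2 * (2 * k + 5) - 4 - 4 * (i + 1) = 2 * (2 * k + 3) - 4 - 4 * i by omega,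
      fun i => show 2 * (2 * k + 5) - 5 - 4 * (i + 1) = 2 * (2 * k + 3) - 5 - 4 * i by omega]
    simp only [Nat.sub_zero, show 2 * k + 5 - 1 = 2 * k + 4 by omega,
      show 2 * k + 5 - 2 = 2 * k + 3 by omega,
      show 2 * (2 * k + 5) - 2 = 4 * k + 8 by omega,
      show 2 * (2 * k + 5) - 3 = 4 * k + 7 by omega,
      show 2 * (2 * k + 5) - 4 = 4 * k + 6 by omega,
      show 2 * (2 * k + 5) - 5 = 4 * k + 5 by omega]
    ring

/-- Closed form for the Kauffman bracket of the bumpered billiard tables `B1(5,n)`,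
odd case. -/
theorem bumpered_B1_closed_form_odd (n : ℕ) (hn : 3 ≤ n) (hodd : n % 2 = 1)
    (e : ℕ → ℤ) (he : ∀ i, e i = 1 ∨ e i = -1) :
    BTb n e =
      CS (e 1) (e 2) (e 3) (e 4) *
          ∏ m ∈ Finset.range ((n - 3) / 2),
            CNt (e (4 * m + 5)) (e (4 * m + 6)) (e (4 * m + 7)) (e (4 * m + 8))
        + (∑ i ∈ Finset.range ((n - 3) / 2 + 1),
            Hb (n - 1 - 2 * i) e * CX (e (2 * n - 3 - 4 * i)) (e (2 * n - 2 - 4 * i)) *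
              ∏ m ∈ Finset.range i,
                CNt (e (2 * n - 1 - 4 * i + 4 * m)) (e (2 * n - 4 * i + 4 * m))
                  (e (2 * n + 1 - 4 * i + 4 * m)) (e (2 * n + 2 - 4 * i + 4 * m)))
        + ∑ i ∈ Finset.range ((n - 3) / 2),
            Hb (n - 2 - 2 * i) e *
                CRt (e (2 * n - 5 - 4 * i)) (e (2 * n - 4 - 4 * i)) (e (2 * n - 3 - 4 * i))
                  (e (2 * n - 2 - 4 * i)) *
              ∏ m ∈ Finset.range i,
                CNt (e (2 * n - 1 - 4 * i + 4 * m)) (e (2 * n - 4 * i + 4 * m))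
                  (e (2 * n + 1 - 4 * i + 4 * m)) (e (2 * n + 2 - 4 * i + 4 * m)) := by
  obtain ⟨k, rfl⟩ : ∃ k, n = 2 * k + 3 := ⟨(n - 3) / 2, by omega⟩
  rw [show (2 * k + 3 - 3) / 2 = k by omega]
  exact BTb_closed_form_aux e k

end
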